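/- With b0 = (ρ−μ1)/(ρ+λ0−μ1) and b1 = (ρ−μ2)/(ρ+λ0−μ2), the strict inequality b1/b0 < (γ2/(γ2−1)) · (1 − 1/δ1) holds. -/

import Mathlib

/-!
For a discount rate `r`, the quadratic `q x = x ^ 2 - m * x - (r - μ1) / σ` satisfies
`q 0 = -(r - μ1) / σ` and `q 1 = -(r - μ2) / σ`. If its roots are `δ < 0 < γ`, factoring `q` gives
`(r - μ2) / (r - μ1) = q 1 / q 0 = (1 - 1 / δ) * (1 - 1 / γ)`. Dividing this identity for `r = ρ`
(roots `δ1`, `γ1`) by the one for `r = ρ + λ0` (roots `δ2`, `γ2`) gives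
`b1 / b0 = γ2 / (γ2 - 1) * (1 - 1 / δ1) * ((1 - 1 / γ1) / (1 - 1 / δ2))`,
whose last factor is below `1` because `1 - 1 / γ1 < 1 < 1 - 1 / δ2`.
-/

/-- The smaller root of `x ^ 2 - m * x - p`, by the quadratic formula. It is a root only when the
discriminant `m ^ 2 + 4 * p` is nonnegative, since `√` vanishes on negative numbers. -/
noncomputable def lowerRoot (m p : ℝ) : ℝ := (m - √(m ^ 2 + 4 * p)) / 2

/-- The larger root of `x ^ 2 - m * x - p`, under the same convention as `lowerRoot`. -/
noncomputable def upperRoot (m p : ℝ) : ℝ := (m + √(m ^ 2 + 4 * p)) / 2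

section Roots

variable {m p x : ℝ}

theorem sub_lowerRoot_mul_sub_upperRoot (hdisc : 0 ≤ m ^ 2 + 4 * p) (x : ℝ) :
    (x - lowerRoot m p) * (x - upperRoot m p) = x ^ 2 - m * x - p := by
  unfold lowerRoot upperRoot
  linear_combination (-1 / 4) * Real.sq_sqrt hdisc

theorem abs_two_mul_sub_lt_sqrt_discrim (h : x ^ 2 < m * x + p) :
    |2 * x - m| < √(m ^ 2 + 4 * p) := by
  apply Real.lt_sqrt_of_sq_lt
  rw [sq_abs]
  linarith

theorem lowerRoot_lt (h : x ^ 2 < m * x + p) : lowerRoot m p < x := by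
  have := (abs_lt.mp (abs_two_mul_sub_lt_sqrt_discrim h)).1
  unfold lowerRoot
  linarith

theorem lt_upperRoot (h : x ^ 2 < m * x + p) : x < upperRoot m p := by
  have := (abs_lt.mp (abs_two_mul_sub_lt_sqrt_discrim h)).2
  unfold upperRoot
  linarith

theorem lowerRoot_neg (hp : 0 < p) : lowerRoot m p < 0 := lowerRoot_lt (by simpa using hp)

theorem upperRoot_pos (hp : 0 < p) : 0 < upperRoot m p := lt_upperRoot (by simpa using hp)

theorem one_lt_upperRoot (h : 1 < m + p) : 1 < upperRoot m p := lt_upperRoot (by simpa using h)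

theorem one_sub_one_div_lowerRoot_mul_upperRoot (hdisc : 0 ≤ m ^ 2 + 4 * p) (hp : p ≠ 0) :
    (1 - 1 / lowerRoot m p) * (1 - 1 / upperRoot m p) = (p + m - 1) / p := by
  have at_zero : lowerRoot m p * upperRoot m p = -p := by
    linear_combination sub_lowerRoot_mul_sub_upperRoot hdisc 0
  have at_one := sub_lowerRoot_mul_sub_upperRoot hdisc 1
  obtain ⟨hlower, hupper⟩ : lowerRoot m p ≠ 0 ∧ upperRoot m p ≠ 0 :=
    mul_ne_zero_iff.mp (at_zero ▸ neg_ne_zero.mpr hp)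
  calc (1 - 1 / lowerRoot m p) * (1 - 1 / upperRoot m p)
      = (1 - lowerRoot m p) * (1 - upperRoot m p) / (lowerRoot m p * upperRoot m p) := by
        field_simp
        ring
    _ = (p + m - 1) / p := by
        rw [at_one, at_zero, div_neg, ← neg_div]
        ring

end Roots

theorem one_sub_one_div_mul_div_lt {δ δ' γ γ' : ℝ} (hδ : δ < 0) (hδ' : δ' < 0) (hγ : 0 < γ)
    (hγ' : 1 < γ') :
    (1 - 1 / δ) * (1 - 1 / γ) / ((1 - 1 / δ') * (1 - 1 / γ')) <
      γ' / (γ' - 1) * (1 - 1 / δ) := by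
  have one_lt_of_neg {t : ℝ} (ht : t < 0) : 1 < 1 - 1 / t := by
    linarith [one_div_neg.mpr ht]
  have hδ_pos : 0 < 1 - 1 / δ := one_pos.trans (one_lt_of_neg hδ)
  have hfactor : (1 - 1 / γ) / (1 - 1 / δ') < 1 := by
    rw [div_lt_one (one_pos.trans (one_lt_of_neg hδ'))]
    linarith [one_div_pos.mpr hγ, one_lt_of_neg hδ']
  have hγ'_inv : γ' / (γ' - 1) = (1 - 1 / γ')⁻¹ := by
    rw [one_sub_div (by positivity), inv_div]
  have hprefix : 0 < γ' / (γ' - 1) * (1 - 1 / δ) :=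
    mul_pos (div_pos (by positivity) (sub_pos.mpr hγ')) hδ_pos
  calc (1 - 1 / δ) * (1 - 1 / γ) / ((1 - 1 / δ') * (1 - 1 / γ'))
      = γ' / (γ' - 1) * (1 - 1 / δ) * ((1 - 1 / γ) / (1 - 1 / δ')) := by
        rw [hγ'_inv]
        simp only [div_eq_mul_inv, mul_inv]
        ring
    _ < γ' / (γ' - 1) * (1 - 1 / δ) := mul_lt_of_lt_one_right hprefix hfactor

theorem div_lt_upperRoot_div_mul_one_sub {m p q : ℝ} (hp : 0 < p) (hq : 0 < q)
    (hmq : 1 < m + q) :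
    (p + m - 1) / p / ((q + m - 1) / q) <
      upperRoot m q / (upperRoot m q - 1) * (1 - 1 / lowerRoot m p) := by
  rw [← one_sub_one_div_lowerRoot_mul_upperRoot (by positivity) hp.ne',
    ← one_sub_one_div_lowerRoot_mul_upperRoot (by positivity) hq.ne']
  exact one_sub_one_div_mul_div_lt (lowerRoot_neg hp) (lowerRoot_neg hq) (upperRoot_pos hp)
    (one_lt_upperRoot hmq)

theorem stmt_7_general (μ1 μ2 ρ σ lam0 b0 b1 m δ1 γ2 : ℝ)
    (hσ : 0 < σ) (hμ1 : μ1 < ρ) (hμ1' : μ1 < ρ + lam0) (hμ2' : μ2 < ρ + lam0)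
    (hm : m = 1 + (μ1 - μ2) / σ)
    (hb0 : b0 = (ρ - μ1) / (ρ + lam0 - μ1)) (hb1 : b1 = (ρ - μ2) / (ρ + lam0 - μ2))
    (hδ1 : δ1 = (m - Real.sqrt (m ^ 2 + 4 * (ρ - μ1) / σ)) / 2)
    (hγ2 : γ2 = (m + Real.sqrt (m ^ 2 + 4 * (ρ + lam0 - μ1) / σ)) / 2) :
    b1 / b0 < γ2 / (γ2 - 1) * (1 - 1 / δ1) := by
  have shift (r : ℝ) : (r - μ1) / σ + m - 1 = (r - μ2) / σ := by rw [hm]; ring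
  have hp : 0 < (ρ - μ1) / σ := div_pos (sub_pos.mpr hμ1) hσ
  have hq : 0 < (ρ + lam0 - μ1) / σ := div_pos (sub_pos.mpr hμ1') hσ
  have hmq : 1 < m + (ρ + lam0 - μ1) / σ := by
    linarith [shift (ρ + lam0), div_pos (sub_pos.mpr hμ2') hσ]
  have hδ : δ1 = lowerRoot m ((ρ - μ1) / σ) := by rw [hδ1, lowerRoot, mul_div_assoc]
  have hγ : γ2 = upperRoot m ((ρ + lam0 - μ1) / σ) := by rw [hγ2, upperRoot, mul_div_assoc]
  have hratio := div_lt_upperRoot_div_mul_one_sub hp hq hmq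
  rwa [shift, shift, div_div_div_cancel_right₀ hσ.ne', div_div_div_cancel_right₀ hσ.ne',
    div_div_div_comm, ← hb1, ← hb0, ← hδ, ← hγ] at hratio

theorem stmt_7 (μ1 μ2 ρ σ lam0 b0 b1 m δ1 γ2 : ℝ)
    (hσ : 0 < σ) (hlam0 : 0 < lam0) (hμ1 : μ1 < ρ) (hμ2 : μ2 < ρ)
    (hm : m = 1 + (μ1 - μ2) / σ)
    (hb0 : b0 = (ρ - μ1) / (ρ + lam0 - μ1)) (hb1 : b1 = (ρ - μ2) / (ρ + lam0 - μ2))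
    (hδ1 : δ1 = (m - Real.sqrt (m ^ 2 + 4 * (ρ - μ1) / σ)) / 2)
    (hγ2 : γ2 = (m + Real.sqrt (m ^ 2 + 4 * (ρ + lam0 - μ1) / σ)) / 2) :
    b1 / b0 < γ2 / (γ2 - 1) * (1 - 1 / δ1) :=
  stmt_7_general μ1 μ2 ρ σ lam0 b0 b1 m δ1 γ2 hσ hμ1 (by linarith) (by linarith)
    hm hb0 hb1 hδ1 hγ2
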